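/- Let p, a, b, K be real numbers with p > 1, a > 0, b > 0 and K ≥ 0, and define g(t) := (a/2)·t² − (b/(2p))·t^{2p} + (K/p)·t^{p} for t > 0. Then there exists a unique t₀ > 0 such that g(t) < g(t₀) for every t > 0 with t ≠ t₀; that is, g attains a strict global maximum on (0, ∞) at a unique point. -/

import Mathlib

/-!
In the variable `s = t ^ (2 * p)` the function is
`a / 2 * s ^ (1 / p) - b / (2 * p) * s + K / p * s ^ (1 / 2)`, which is strictly concave since
`1 / p < 1`. Hence any critical point is the strict global maximizer. The critical point equation is
`a * t ^ 2 + K * t ^ p = b * t ^ (2 * p)`; it has a solution by the intermediate value theorem, and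
the tangent line inequality for the two concave powers is Bernoulli's inequality.
-/

theorem exists_critical (p a b K : ℝ) (hp : 1 < p) (ha : 0 < a) (hb : 0 < b) (hK : 0 ≤ K) :
    ∃ t : ℝ, 0 < t ∧ a * t ^ (2 : ℝ) + K * t ^ p = b * t ^ (2 * p) := by
  have hq : 0 < 2 * p - 2 := by linarith
  have hp0 : 0 < p := by linarith
  have split1 : ∀ t : ℝ, 0 < t → t ^ (2 * p) = t ^ (2 * p - 2) * t ^ (2 : ℝ) := fun t ht => by
    rw [← Real.rpow_add ht]; congr 1; ring
  have split2 : ∀ t : ℝ, 0 < t → t ^ (2 * p) = t ^ p * t ^ p := fun t ht => by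
    rw [← Real.rpow_add ht]; congr 1; ring
  set l : ℝ := (a / b) ^ (2 * p - 2)⁻¹ with hl
  have hl0 : 0 < l := by positivity
  have hlp : l ^ (2 * p - 2) = a / b := Real.rpow_inv_rpow (by positivity) hq.ne'
  -- At `r` each of the two lower-order terms is at most half of `b * r ^ (2 * p)`.
  set r : ℝ := max ((2 * a / b) ^ (2 * p - 2)⁻¹) ((2 * K / b) ^ p⁻¹) with hr
  have hlr : l ≤ r := by
    refine le_trans ?_ (le_max_left _ _)
    apply Real.rpow_le_rpow (by positivity) _ (by positivity)
    gcongr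
    linarith
  have hr0 : 0 < r := hl0.trans_le hlr
  have hr1 : 2 * a / b ≤ r ^ (2 * p - 2) := by
    rw [← Real.rpow_inv_rpow (show 0 ≤ 2 * a / b by positivity) hq.ne']
    exact Real.rpow_le_rpow (by positivity) (le_max_left _ _) hq.le
  have hr2 : 2 * K / b ≤ r ^ p := by
    rw [← Real.rpow_inv_rpow (show 0 ≤ 2 * K / b by positivity) hp0.ne']
    exact Real.rpow_le_rpow (by positivity) (le_max_right _ _) hp0.le
  have hcont : ContinuousOn
      (fun t : ℝ => b * t ^ (2 * p) - (a * t ^ (2 : ℝ) + K * t ^ p)) (Set.Icc l r) := by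
    have h (q : ℝ) (hq : 0 < q) : Continuous fun t : ℝ => t ^ q :=
      Real.continuous_rpow_const hq.le
    have h1 := h (2 * p) (by linarith)
    have h2 := h 2 (by norm_num)
    have h3 := h p hp0
    fun_prop
  have hmem : (0 : ℝ) ∈ Set.Icc (b * l ^ (2 * p) - (a * l ^ (2 : ℝ) + K * l ^ p))
      (b * r ^ (2 * p) - (a * r ^ (2 : ℝ) + K * r ^ p)) := by
    constructor
    · rw [split1 l hl0, hlp]
      have h : b * (a / b * l ^ (2 : ℝ)) = a * l ^ (2 : ℝ) := by field_simp
      have : 0 ≤ K * l ^ p := by positivity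
      linarith
    · rw [div_le_iff₀ hb] at hr1 hr2
      have e1 := mul_le_mul_of_nonneg_right hr1 (show 0 ≤ r ^ (2 : ℝ) by positivity)
      have e2 := mul_le_mul_of_nonneg_right hr2 (show 0 ≤ r ^ p by positivity)
      have f1 := split1 r hr0
      have f2 := split2 r hr0
      have g1 : r ^ (2 * p - 2) * b * r ^ (2 : ℝ) = b * r ^ (2 * p) := by rw [f1]; ring
      have g2 : r ^ p * b * r ^ p = b * r ^ (2 * p) := by rw [f2]; ring
      linarith
  obtain ⟨t, ht, h0⟩ := intermediate_value_Icc hlr hcont hmem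
  exact ⟨t, hl0.trans_le ht.1, by dsimp only at h0; linarith⟩

/-- Tangent line inequality at `x = 1` for the strictly concave power `x ^ (q / r)`, written in
terms of `y` with `x = y ^ r`. -/
theorem rpow_lt_tangent {y q r : ℝ} (hy : 0 < y) (hy1 : y ≠ 1) (hq : 0 < q) (hqr : q < r) :
    y ^ q < 1 + q / r * (y ^ r - 1) := by
  have hr : 0 < r := hq.trans hqr
  have hx : 0 < y ^ r := by positivity
  have hne : y ^ r ≠ 1 := fun h => hy1 <|
    (Real.rpow_left_inj hy.le zero_le_one hr.ne').mp (h.trans (Real.one_rpow r).symm)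
  have h := rpow_one_add_lt_one_add_mul_self (s := y ^ r - 1) (p := q / r)
    (by linarith) (sub_ne_zero.mpr hne) (by positivity) ((div_lt_one hr).mpr hqr)
  rwa [add_sub_cancel, ← Real.rpow_mul hy.le, mul_div_cancel₀ _ hr.ne'] at h

theorem stmt_9 (p a b K : ℝ) (hp : 1 < p) (ha : 0 < a) (hb : 0 < b) (hK : 0 ≤ K) :
    ∃! t₀ : ℝ, 0 < t₀ ∧
      ∀ t : ℝ, 0 < t → t ≠ t₀ →
        a / 2 * t ^ (2 : ℝ) - b / (2 * p) * t ^ (2 * p) + K / p * t ^ p <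
          a / 2 * t₀ ^ (2 : ℝ) - b / (2 * p) * t₀ ^ (2 * p) + K / p * t₀ ^ p := by
  have hp0 : 0 < p := by linarith
  obtain ⟨t₀, ht₀, hcrit⟩ := exists_critical p a b K hp ha hb hK
  have hmax : ∀ t : ℝ, 0 < t → t ≠ t₀ →
      a / 2 * t ^ (2 : ℝ) - b / (2 * p) * t ^ (2 * p) + K / p * t ^ p <
        a / 2 * t₀ ^ (2 : ℝ) - b / (2 * p) * t₀ ^ (2 * p) + K / p * t₀ ^ p := by
    intro t ht hne
    obtain ⟨y, hy, rfl⟩ : ∃ y : ℝ, 0 < y ∧ t = t₀ * y :=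
      ⟨t / t₀, by positivity, by field_simp⟩
    have hy1 : y ≠ 1 := fun h => hne (by rw [h, mul_one])
    have h1 := rpow_lt_tangent hy hy1 (q := 2) (r := 2 * p) (by norm_num) (by linarith)
    have h2 := rpow_lt_tangent hy hy1 (q := p) (r := 2 * p) hp0 (by linarith)
    simp only [Real.mul_rpow ht₀.le hy.le]
    have A : 0 < a / 2 * t₀ ^ (2 : ℝ) := by positivity
    have B : 0 ≤ K / p * t₀ ^ p := by positivity
    have e1 := mul_lt_mul_of_pos_left h1 A
    have e2 := mul_le_mul_of_nonneg_left h2.le B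
    -- The first-order terms of the two tangent lines cancel the `b`-term, by criticality of `t₀`.
    have key : a / 2 * t₀ ^ (2 : ℝ) * (1 + 2 / (2 * p) * (y ^ (2 * p) - 1))
        + K / p * t₀ ^ p * (1 + p / (2 * p) * (y ^ (2 * p) - 1))
        - b / (2 * p) * (t₀ ^ (2 * p) * y ^ (2 * p))
        = a / 2 * t₀ ^ (2 : ℝ) - b / (2 * p) * t₀ ^ (2 * p) + K / p * t₀ ^ p := by
      generalize t₀ ^ (2 * p) = u at *
      generalize t₀ ^ (2 : ℝ) = v at *
      generalize t₀ ^ p = w at *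
      generalize y ^ (2 * p) = x at *
      have hp' := hp0.ne'
      field_simp
      linear_combination (x - 1) * hcrit
    linarith
  refine ⟨t₀, ⟨ht₀, hmax⟩, ?_⟩
  rintro t ⟨ht, hmax'⟩
  by_contra hne
  exact lt_asymm (hmax t ht hne) (hmax' t₀ ht₀ (Ne.symm hne))
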